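/- Let (K,w) be a weighted simplicial complex over an integral domain R, and suppose K collapses onto L = K \ {σ,τ} by an elementary collapse of dimension n ≥ 1, where σ^{(n-1)} is a free face of τ^{(n)}. If w(σ) ≠ 0 and w(τ) = u·w(σ) for some unit u ∈ R (i.e. w(σ) and w(τ) are nonzero associates), then the elementary collapse preserves weighted homology, i.e. H_i(K,w) ≅ H_i(L,w|_L) for all i ≥ 0. -/

import Mathlib

/-!
Rescaling each simplex `ρ` by its weight, `ρ ↦ w ρ • ρ`, turns the weighted boundary into the
ordinary simplicial boundary `bd` on the free module over all finite vertex sets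
(`scale_wBoundary`). As the basis simplices have nonzero weight and `R` is a domain, the rescaling
is injective; hence `∂ ∘ ∂ = 0` and the compatibility of `∂` with the inclusion `C(L) → C(K)`
follow from the corresponding facts for `bd`.

Since `τ` is the only coface of `σ`, the `σ`-coefficient of `bd (scale x)` is `±` the
`τ`-coefficient of `scale x` (`exists_sign_bd_scale_apply`). Because `w τ = u * w σ` with `u` a
unit, the `σ`-coefficient of a chain can be removed by subtracting a multiple of `∂ τ`; and a chain
whose boundary has no `σ`-coefficient has no `τ`-coefficient. So every chain of `K` whose
boundary avoids `σ` is, modulo a boundary, a chain of `L` (`exists_sub_mem_range_incl`). Applied to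
cycles, this gives surjectivity of `H_i(L) → H_i(K)`; applied to a chain bounding a cycle
of `L`, it gives injectivity.
-/

/-! # Prelude: weighted simplicial complexes and discrete Morse theory -/

/-- A finite abstract simplicial complex on a vertex type `V`:
a finite set of nonempty finite vertex sets, closed under nonempty subsets. -/
structure FinSC (V : Type*) where
  faces : Finset (Finset V)
  not_empty_mem : ∅ ∉ faces
  down_closed : ∀ σ ∈ faces, ∀ τ ⊆ σ, τ.Nonempty → τ ∈ faces

namespace FinSC

variable {V : Type*} [LinearOrder V] {R : Type*} [CommRing R] [IsDomain R]

/-- `(K, w)` is a weighted simplicial complex: weights of faces divide weights of cofaces. -/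
def IsWeight (K : FinSC V) (w : Finset V → R) : Prop :=
  ∀ σ ∈ K.faces, ∀ τ ∈ K.faces, σ ⊆ τ → w σ ∣ w τ

open scoped Classical in
/-- The quotient `a / b` in an integral domain, defined (via choice) when `b ∣ a`, else `0`. -/
noncomputable def divR {R : Type*} [CommRing R] (a b : R) : R :=
  if h : b ∣ a then h.choose else 0

/-- `dFace σ i` deletes the `i`-th vertex (in the linear order) from the simplex `σ`. -/
def dFace (σ : Finset V) (i : ℕ) : Finset V :=
  match (σ.sort (· ≤ ·))[i]? with
  | some v => σ.erase v
  | none => σ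

/-- The basis of the weighted chain group in degree `n`:
`n`-simplices (i.e. of cardinality `n+1`) of `K` with nonzero weight. -/
abbrev ChainIdx (K : FinSC V) (w : Finset V → R) (n : ℕ) :=
  {σ : Finset V // σ ∈ K.faces ∧ σ.card = n + 1 ∧ w σ ≠ 0}

/-- The weighted chain group `C_n(K, w)`: the free `R`-module on the `n`-simplices
of `K` with nonzero weight. -/
abbrev WChain (K : FinSC V) (w : Finset V → R) (n : ℕ) :=
  ChainIdx K w n →₀ R

open scoped Classical in
/-- The weighted boundary `∂^w σ = Σ_i (-1)^i (w σ / w (d_i σ)) d_i σ` of a single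
`(n+1)`-simplex `σ`, as an element of `C_n(K, w)`. -/
noncomputable def bdElem (K : FinSC V) (w : Finset V → R) (n : ℕ) (σ : Finset V) :
    WChain K w n :=
  ∑ i ∈ Finset.range (n + 2),
    if h : dFace σ i ∈ K.faces ∧ (dFace σ i).card = n + 1 ∧ w (dFace σ i) ≠ 0 then
      Finsupp.single (⟨dFace σ i, h⟩ : ChainIdx K w n)
        ((-1 : R) ^ i * divR (w σ) (w (dFace σ i)))
    else 0

/-- The weighted boundary map `∂^w_{n+1} : C_{n+1}(K,w) → C_n(K,w)`. -/
noncomputable def wBoundary (K : FinSC V) (w : Finset V → R) (n : ℕ) :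
    WChain K w (n + 1) →ₗ[R] WChain K w n :=
  Finsupp.linearCombination R (fun σ : ChainIdx K w (n + 1) => bdElem K w n σ.1)

/-- The submodule of weighted `n`-cycles (`ker ∂^w_n`; everything in degree `0`). -/
noncomputable def cycles (K : FinSC V) (w : Finset V → R) :
    (n : ℕ) → Submodule R (WChain K w n)
  | 0 => ⊤
  | n + 1 => LinearMap.ker (wBoundary K w n)

/-- The submodule of weighted `n`-boundaries (`im ∂^w_{n+1}`). -/
noncomputable def bdries (K : FinSC V) (w : Finset V → R) (n : ℕ) :
    Submodule R (WChain K w n) :=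
  LinearMap.range (wBoundary K w n)

/-- The `n`-th weighted homology `H_n(K,w) = ker ∂^w_n / im ∂^w_{n+1}`, realized as the
image of the cycles in `C_n(K,w) ⧸ im ∂^w_{n+1}` (since `im ∂^w_{n+1} ⊆ ker ∂^w_n`,
this is exactly `ker ∂^w_n / im ∂^w_{n+1}`). -/
noncomputable def wHomologyS (K : FinSC V) (w : Finset V → R) (n : ℕ) :
    Submodule R (WChain K w n ⧸ bdries K w n) :=
  Submodule.map (bdries K w n).mkQ (cycles K w n)

/-- The `n`-th weighted homology as a type (an `R`-module). -/
abbrev wHomology (K : FinSC V) (w : Finset V → R) (n : ℕ) :=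
  ↥(wHomologyS K w n)

/-- The homology class of a weighted cycle. -/
noncomputable def classOf (K : FinSC V) (w : Finset V → R) (n : ℕ)
    (z : WChain K w n) (hz : z ∈ cycles K w n) : wHomology K w n :=
  ⟨(bdries K w n).mkQ z, Submodule.mem_map_of_mem hz⟩

/-- `σ` is a free face of `τ` in `K`: `σ` is a proper face of `τ` and of no other simplex. -/
def IsFreeFace (K : FinSC V) (σ τ : Finset V) : Prop :=
  σ ∈ K.faces ∧ τ ∈ K.faces ∧ σ ⊂ τ ∧ ∀ ρ ∈ K.faces, σ ⊂ ρ → ρ = τ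

/-- An elementary collapse: removal of a free face pair. -/
def ElemCollapse (K L : FinSC V) : Prop :=
  ∃ σ τ : Finset V, IsFreeFace K σ τ ∧ L.faces = K.faces \ {σ, τ}

/-- `K ↘ L`: `K` collapses onto `L` by a finite sequence of elementary collapses. -/
def Collapses (K L : FinSC V) : Prop :=
  Relation.ReflTransGen ElemCollapse K L

/-- `σ` is a maximal face of `K`: it is a proper face of no simplex of `K`. -/
def IsMaximalFace (K : FinSC V) (σ : Finset V) : Prop :=
  σ ∈ K.faces ∧ ∀ τ ∈ K.faces, ¬ σ ⊂ τ

/-- `f : K → ℝ` is a discrete Morse function: each simplex has at most one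
codimension-one coface with no bigger `f`-value, and at most one codimension-one
face with no smaller `f`-value. -/
def IsDiscreteMorse (K : FinSC V) (f : Finset V → ℝ) : Prop :=
  ∀ α ∈ K.faces,
    {β : Finset V | β ∈ K.faces ∧ α ⊂ β ∧ β.card = α.card + 1 ∧ f β ≤ f α}.Subsingleton ∧
    {γ : Finset V | γ ∈ K.faces ∧ γ ⊂ α ∧ γ.card + 1 = α.card ∧ f α ≤ f γ}.Subsingleton

/-- `α` is a critical simplex of the discrete Morse function `f`. -/
def IsCritical (K : FinSC V) (f : Finset V → ℝ) (α : Finset V) : Prop :=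
  (∀ β ∈ K.faces, α ⊂ β → β.card = α.card + 1 → ¬ f β ≤ f α) ∧
  (∀ γ ∈ K.faces, γ ⊂ α → γ.card + 1 = α.card → ¬ f α ≤ f γ)

/-- `α` is `w`-simple: `w α ≠ 0`, and any codimension-one face `γ < α` with
`f γ ≥ f α` satisfies `w γ = w α`. -/
def IsWSimple (K : FinSC V) (w : Finset V → R) (f : Finset V → ℝ) (α : Finset V) : Prop :=
  w α ≠ 0 ∧ ∀ γ ∈ K.faces, γ ⊂ α → γ.card + 1 = α.card → f α ≤ f γ → w γ = w α

/-- The level subcomplex `K(c)`: all simplices with `f`-value at most `c`,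
together with all of their faces. -/
noncomputable def levelSub (K : FinSC V) (f : Finset V → ℝ) (c : ℝ) : FinSC V where
  faces := K.faces.filter (fun α => ∃ β ∈ K.faces, α ⊆ β ∧ f β ≤ c)
  not_empty_mem := by simp [Finset.mem_filter, K.not_empty_mem]
  down_closed := by
    intro σ hσ τ hτsub hτne
    simp only [Finset.mem_filter] at hσ ⊢
    obtain ⟨hσK, β, hβ, hσβ, hfβ⟩ := hσ
    exact ⟨K.down_closed σ hσK τ hτsub hτne, β, hβ, hτsub.trans hσβ, hfβ⟩

/-- The chains of `C_n(K,w)` supported on simplices of a subcomplex `L`. -/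
noncomputable def chainsIn (K L : FinSC V) (w : Finset V → R) (n : ℕ) :
    Submodule R (WChain K w n) where
  carrier := {x | ∀ σ : ChainIdx K w n, x σ ≠ 0 → σ.1 ∈ L.faces}
  add_mem' := by
    intro a b ha hb σ h
    by_cases h1 : a σ = 0
    · exact hb σ (by simpa [h1] using h)
    · exact ha σ h1
  zero_mem' := by intro σ h; simp at h
  smul_mem' := by
    intro r x hx σ h
    refine hx σ fun h0 => ?_
    simp [Finsupp.smul_apply, h0] at h

/-- The image of the map `i_* : H_n(L,w) → H_n(K,w)` induced by the inclusion of
chain complexes: the classes in `H_n(K,w)` of cycles of `K` supported on simplices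
of the subcomplex `L`. -/
noncomputable def imInduced (K L : FinSC V) (w : Finset V → R) (n : ℕ) :
    Submodule R (wHomology K w n) :=
  Submodule.comap (wHomologyS K w n).subtype
    (Submodule.map (bdries K w n).mkQ (cycles K w n ⊓ chainsIn K L w n))

end FinSC

section OrderComplex

variable {A : Type*} [LinearOrder A]

/-- The proper (nonempty, not all of `S`) substrings of a sequence `S`,
i.e. its proper nonempty infixes. -/
def properSubstr (S : List A) : Finset (List A) :=
  ((S.tails.flatMap List.inits).toFinset).filter (fun T => T ≠ [] ∧ T ≠ S)

/-- The order complex `Δ(P_S)` of the poset of proper substrings of `S` under the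
substring (infix) partial order: faces are the nonempty chains. -/
def orderComplex (S : List A) : FinSC (List A) where
  faces := (properSubstr S).powerset.filter
    (fun σ => σ.Nonempty ∧ ∀ T₁ ∈ σ, ∀ T₂ ∈ σ, T₁ <:+: T₂ ∨ T₂ <:+: T₁)
  not_empty_mem := by simp
  down_closed := by
    intro σ hσ τ hτsub hτne
    simp only [Finset.mem_filter, Finset.mem_powerset] at hσ ⊢
    exact ⟨hτsub.trans hσ.1, hτne,
      fun T₁ h1 T₂ h2 => hσ.2.2 T₁ (hτsub h1) T₂ (hτsub h2)⟩

end OrderComplex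

namespace FinSC

variable {V : Type*} [LinearOrder V] {R : Type*} [CommRing R] [IsDomain R]

/-! ### The unweighted boundary -/

/-- The sign of the face `σ.erase v` in the simplicial boundary of `σ`: the parity of the position
of `v` in `σ`. -/
def sgn (R : Type*) [CommRing R] (σ : Finset V) (v : V) : R :=
  (-1) ^ (σ.filter (· < v)).card

/-- The unweighted simplicial boundary on the free module over all finite subsets of `V`. It is
augmented: the boundary of a vertex is the empty set. -/
noncomputable def bd (V R : Type*) [LinearOrder V] [CommRing R] :
    (Finset V →₀ R) →ₗ[R] (Finset V →₀ R) :=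
  Finsupp.linearCombination R
    (fun σ : Finset V => ∑ v ∈ σ, Finsupp.single (σ.erase v) (sgn R σ v))

lemma bd_single (σ : Finset V) (r : R) :
    bd V R (Finsupp.single σ r) = ∑ v ∈ σ, Finsupp.single (σ.erase v) (r * sgn R σ v) := by
  simp [bd, Finset.smul_sum]

lemma sgn_mul_self (σ : Finset V) (v : V) : sgn R σ v * sgn R σ v = 1 := by
  unfold sgn
  rw [← mul_pow]; simp

/-- Deleting two vertices in either order gives opposite signs. -/
lemma sgn_swap_of_lt {σ : Finset V} {v v' : V} (hv : v ∈ σ) (hlt : v < v') :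
    sgn R σ v * sgn R (σ.erase v) v' + sgn R σ v' * sgn R (σ.erase v') v = 0 := by
  have h1 : (σ.erase v').filter (· < v) = σ.filter (· < v) := by
    ext x; simp only [Finset.mem_filter, Finset.mem_erase]
    constructor
    · tauto
    · rintro ⟨hx, hxv⟩; exact ⟨⟨(hxv.trans hlt).ne, hx⟩, hxv⟩
  have h2 : σ.filter (· < v') = insert v ((σ.erase v).filter (· < v')) := by
    ext x; simp only [Finset.mem_filter, Finset.mem_erase, Finset.mem_insert]
    by_cases hx : x = v
    · subst hx; simp [hv, hlt]
    · simp [hx]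
  have h3 : (σ.filter (· < v')).card = ((σ.erase v).filter (· < v')).card + 1 := by
    rw [h2, Finset.card_insert_of_notMem (by simp)]
  unfold sgn
  rw [h1, h3]; ring

lemma bd_bd (x : Finset V →₀ R) : bd V R (bd V R x) = 0 := by
  induction x using Finsupp.induction_linear with
  | zero => simp
  | add f g hf hg => simp [hf, hg]
  | single σ r =>
    rw [bd_single, map_sum]
    simp only [bd_single]
    rw [Finset.sum_sigma']
    refine Finset.sum_involution (fun p _ => ⟨p.2, p.1⟩) ?_ ?_ ?_ ?_
    · rintro ⟨v, v'⟩ h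
      simp only [Finset.mem_sigma, Finset.mem_erase] at h
      obtain ⟨hv, hne, hv'⟩ := h
      rw [Finset.erase_right_comm (a := v'), ← Finsupp.single_add]
      have key : sgn R σ v * sgn R (σ.erase v) v' + sgn R σ v' * sgn R (σ.erase v') v = 0 := by
        rcases lt_or_gt_of_ne hne with hlt | hlt
        · rw [add_comm]; exact sgn_swap_of_lt hv' hlt
        · exact sgn_swap_of_lt hv hlt
      have : r * sgn R σ v * sgn R (σ.erase v) v' + r * sgn R σ v' * sgn R (σ.erase v') v = 0 := by
        linear_combination r * key
      simp [this]
    · rintro ⟨v, v'⟩ h _ heq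
      simp only [Finset.mem_sigma, Finset.mem_erase] at h
      simp only [Sigma.mk.injEq] at heq
      exact h.2.1 heq.1
    · rintro ⟨v, v'⟩ h
      simp only [Finset.mem_sigma, Finset.mem_erase] at h ⊢
      exact ⟨h.2.2, h.2.1.symm, h.1⟩
    · rintro ⟨v, v'⟩ h; rfl

/-! ### Rescaling by the weights -/

/-- The injection of weighted chains into unweighted ones sending a simplex `ρ` to `w ρ • ρ`. -/
noncomputable def scale (K : FinSC V) (w : Finset V → R) (n : ℕ) :
    WChain K w n →ₗ[R] (Finset V →₀ R) :=
  Finsupp.linearCombination R (fun ρ : ChainIdx K w n => Finsupp.single ρ.1 (w ρ.1))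

lemma scale_single (K : FinSC V) (w : Finset V → R) (n : ℕ) (ρ : ChainIdx K w n) (r : R) :
    scale K w n (Finsupp.single ρ r) = Finsupp.single ρ.1 (r * w ρ.1) := by
  simp [scale]

lemma scale_apply (K : FinSC V) (w : Finset V → R) (n : ℕ) (x : WChain K w n)
    (ρ : ChainIdx K w n) : scale K w n x ρ.1 = x ρ * w ρ.1 := by
  classical
  induction x using Finsupp.induction_linear with
  | zero => simp
  | add f g hf hg => simp [hf, hg, add_mul]
  | single ρ' r =>
    rw [scale_single, Finsupp.single_apply, Finsupp.single_apply]
    by_cases h : ρ' = ρ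
    · subst h; simp
    · have : ρ'.1 ≠ ρ.1 := fun h' => h (Subtype.ext h')
      simp [h, this]

lemma scale_apply_of_card_ne (K : FinSC V) (w : Finset V → R) (n : ℕ) (x : WChain K w n)
    (ρ : Finset V) (hρ : ρ.card ≠ n + 1) : scale K w n x ρ = 0 := by
  classical
  induction x using Finsupp.induction_linear with
  | zero => simp
  | add f g hf hg => simp [hf, hg]
  | single ρ' r =>
    rw [scale_single, Finsupp.single_apply, if_neg]
    rintro rfl
    exact hρ ρ'.2.2.1

lemma scale_apply_of_notMem (K : FinSC V) (w : Finset V → R) (n : ℕ) (x : WChain K w n)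
    (ρ : Finset V) (hρ : ρ ∉ K.faces) : scale K w n x ρ = 0 := by
  classical
  induction x using Finsupp.induction_linear with
  | zero => simp
  | add f g hf hg => simp [hf, hg]
  | single ρ' r =>
    rw [scale_single, Finsupp.single_apply, if_neg]
    rintro rfl
    exact hρ ρ'.2.1

lemma scale_injective (K : FinSC V) (w : Finset V → R) (n : ℕ) :
    Function.Injective (scale K w n) := by
  intro x y h
  ext ρ
  have := DFunLike.congr_fun h ρ.1
  rw [scale_apply, scale_apply] at this
  exact mul_right_cancel₀ ρ.2.2.2 this

/-- The boundary indexed by positions in the sorted vertex list agrees with the one indexed by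
vertices. -/
lemma sum_range_dFace {M : Type*} [AddCommMonoid M] (σ : Finset V) (k : ℕ) (hk : σ.card = k)
    (f : Finset V → R → M) :
    ∑ i ∈ Finset.range k, f (dFace σ i) ((-1) ^ i) = ∑ v ∈ σ, f (σ.erase v) (sgn R σ v) := by
  rw [Finset.sum_range]
  refine Finset.sum_bij (fun i _ => σ.orderEmbOfFin hk i) ?_ ?_ ?_ ?_
  · intro i _; exact Finset.orderEmbOfFin_mem σ hk i
  · intro i _ j _ h; exact (σ.orderEmbOfFin hk).injective h
  · intro v hv
    have : v ∈ Set.range (σ.orderEmbOfFin hk) := by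
      rw [Finset.range_orderEmbOfFin]; exact hv
    obtain ⟨i, hi⟩ := this
    exact ⟨i, Finset.mem_univ _, hi⟩
  · intro i _
    have h1 : dFace σ i = σ.erase (σ.orderEmbOfFin hk i) := by
      have hi : (i : ℕ) < (σ.sort (· ≤ ·)).length := by simp [hk]
      simp only [dFace, List.getElem?_eq_getElem hi, Finset.orderEmbOfFin_apply]
      rfl
    have h2 : σ.filter (· < σ.orderEmbOfFin hk i)
        = (Finset.Iio i).map (σ.orderEmbOfFin hk).toEmbedding := by
      ext x
      simp only [Finset.mem_filter, Finset.mem_map, Finset.mem_Iio]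
      constructor
      · rintro ⟨hx, hlt⟩
        have : x ∈ Set.range (σ.orderEmbOfFin hk) := by
          rw [Finset.range_orderEmbOfFin]; exact hx
        obtain ⟨j, rfl⟩ := this
        exact ⟨j, by simpa using hlt, rfl⟩
      · rintro ⟨j, hj, rfl⟩
        exact ⟨Finset.orderEmbOfFin_mem σ hk j, by simpa using hj⟩
    rw [h1]
    unfold sgn
    rw [h2]
    simp

lemma mul_divR {a b : R} (h : b ∣ a) : divR a b * b = a := by
  unfold divR
  rw [dif_pos h, mul_comm]
  exact h.choose_spec.symm

lemma scale_wBoundary (K : FinSC V) (w : Finset V → R) (hw : IsWeight K w) (n : ℕ)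
    (x : WChain K w (n + 1)) :
    scale K w n (wBoundary K w n x) = bd V R (scale K w (n + 1) x) := by
  classical
  induction x using Finsupp.induction_linear with
  | zero => simp
  | add f g hf hg => simp [hf, hg]
  | single ρ r =>
    obtain ⟨ρ, hρ, hc, hwρ⟩ := ρ
    have hb : scale K w n (bdElem K w n ρ) = bd V R (Finsupp.single ρ (w ρ)) := by
      rw [bd_single, bdElem, map_sum,
        ← sum_range_dFace (R := R) ρ (n + 2) hc (fun ρ' s => Finsupp.single ρ' (w ρ * s))]
      refine Finset.sum_congr rfl fun i hi => ?_
      have hi' : i < (ρ.sort (· ≤ ·)).length := by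
        rw [Finset.length_sort, hc]; exact Finset.mem_range.mp hi
      have hd : dFace ρ i = ρ.erase ((ρ.sort (· ≤ ·))[i]) := by
        simp only [dFace, List.getElem?_eq_getElem hi']
      have hmem : (ρ.sort (· ≤ ·))[i] ∈ ρ := by
        have := List.getElem_mem hi'
        simpa only [Finset.mem_sort] using this
      have hcard : (dFace ρ i).card = n + 1 := by
        rw [hd, Finset.card_erase_of_mem hmem, hc]; rfl
      have hsub : dFace ρ i ⊆ ρ := by rw [hd]; exact Finset.erase_subset _ _
      have hK : dFace ρ i ∈ K.faces :=
        K.down_closed ρ hρ _ hsub (Finset.card_pos.mp (by omega))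
      have hdvd := hw _ hK _ hρ hsub
      have hne : w (dFace ρ i) ≠ 0 := fun h0 => hwρ (by rw [h0] at hdvd; exact zero_dvd_iff.mp hdvd)
      rw [dif_pos ⟨hK, hcard, hne⟩, scale_single]
      simp only
      rw [mul_assoc, mul_divR hdvd, mul_comm]
    rw [wBoundary, Finsupp.linearCombination_single, map_smul, hb, scale_single, ← map_smul]
    simp

lemma wBoundary_wBoundary (K : FinSC V) (w : Finset V → R) (hw : IsWeight K w) (n : ℕ)
    (x : WChain K w (n + 2)) : wBoundary K w n (wBoundary K w (n + 1) x) = 0 := by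
  apply scale_injective
  rw [scale_wBoundary K w hw, scale_wBoundary K w hw, bd_bd, map_zero]

lemma wBoundary_mem_cycles (K : FinSC V) (w : Finset V → R) (hw : IsWeight K w) (n : ℕ)
    (x : WChain K w (n + 1)) : wBoundary K w n x ∈ cycles K w n := by
  cases n with
  | zero => exact Submodule.mem_top
  | succ n => exact LinearMap.mem_ker.mpr (wBoundary_wBoundary K w hw n x)

/-! ### Chains of a subcomplex -/

/-- The inclusion of chain groups induced by the inclusion of a subcomplex `L` of `K`. -/
noncomputable def incl {K L : FinSC V} (hLK : L.faces ⊆ K.faces) (w : Finset V → R) (n : ℕ) :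
    WChain L w n →ₗ[R] WChain K w n :=
  Finsupp.lmapDomain R R (fun ρ : ChainIdx L w n => (⟨ρ.1, hLK ρ.2.1, ρ.2.2⟩ : ChainIdx K w n))

lemma incl_single {K L : FinSC V} (hLK : L.faces ⊆ K.faces) (w : Finset V → R) (n : ℕ)
    (ρ : ChainIdx L w n) (r : R) :
    incl hLK w n (Finsupp.single ρ r) = Finsupp.single ⟨ρ.1, hLK ρ.2.1, ρ.2.2⟩ r := by
  simp [incl, Finsupp.mapDomain_single]

lemma scale_incl {K L : FinSC V} (hLK : L.faces ⊆ K.faces) (w : Finset V → R) (n : ℕ)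
    (x : WChain L w n) : scale K w n (incl hLK w n x) = scale L w n x := by
  induction x using Finsupp.induction_linear with
  | zero => simp
  | add f g hf hg => simp [hf, hg]
  | single ρ r => rw [incl_single, scale_single, scale_single]

lemma incl_injective {K L : FinSC V} (hLK : L.faces ⊆ K.faces) (w : Finset V → R) (n : ℕ) :
    Function.Injective (incl (R := R) hLK w n) := by
  intro x y h
  apply scale_injective
  rw [← scale_incl hLK, h, scale_incl]

lemma IsWeight.mono {K L : FinSC V} (hLK : L.faces ⊆ K.faces) {w : Finset V → R}
    (hw : IsWeight K w) : IsWeight L w :=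
  fun σ hσ τ hτ h => hw σ (hLK hσ) τ (hLK hτ) h

lemma wBoundary_incl {K L : FinSC V} (hLK : L.faces ⊆ K.faces) {w : Finset V → R}
    (hw : IsWeight K w) (n : ℕ) (x : WChain L w (n + 1)) :
    wBoundary K w n (incl hLK w (n + 1) x) = incl hLK w n (wBoundary L w n x) := by
  apply scale_injective
  rw [scale_wBoundary K w hw, scale_incl, scale_incl, scale_wBoundary L w (hw.mono hLK)]

lemma incl_mem_cycles_iff {K L : FinSC V} (hLK : L.faces ⊆ K.faces) {w : Finset V → R}
    (hw : IsWeight K w) (n : ℕ) (x : WChain L w n) :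
    incl hLK w n x ∈ cycles K w n ↔ x ∈ cycles L w n := by
  cases n with
  | zero => simp [cycles]
  | succ n =>
    simp only [cycles, LinearMap.mem_ker, wBoundary_incl hLK hw]
    exact map_eq_zero_iff _ (incl_injective hLK w n)

lemma mem_range_incl {K L : FinSC V} (hLK : L.faces ⊆ K.faces) (w : Finset V → R) (n : ℕ)
    (x : WChain K w n) (hx : ∀ ρ ∈ K.faces, ρ ∉ L.faces → scale K w n x ρ = 0) :
    ∃ y, incl hLK w n y = x := by
  suffices h : x ∈ LinearMap.range (incl hLK w n) from h
  rw [← Finsupp.sum_single x]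
  refine Submodule.sum_mem _ fun ρ hρ => ?_
  by_cases hL : ρ.1 ∈ L.faces
  · exact ⟨Finsupp.single ⟨ρ.1, hL, ρ.2.2⟩ (x ρ), incl_single ..⟩
  · have := hx ρ.1 ρ.2.1 hL
    rw [scale_apply] at this
    rcases mul_eq_zero.mp this with h | h
    · simp [h]
    · exact absurd h ρ.2.2.2

/-! ### The collapse -/

/-- The coefficient of a free face `σ` in a boundary comes only from its unique coface `τ`. -/
lemma exists_sign_bd_scale_apply {K : FinSC V} {σ τ : Finset V} (hfree : IsFreeFace K σ τ)
    (hcard : τ.card = σ.card + 1) (w : Finset V → R) :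
    ∃ ε : R, ε * ε = 1 ∧
      ∀ (j : ℕ) (x : WChain K w j), bd V R (scale K w j x) σ = ε * scale K w j x τ := by
  classical
  obtain ⟨-, -, hστ, huniq⟩ := hfree
  obtain ⟨v, hv, rfl⟩ : ∃ v ∈ τ, σ = τ.erase v := by
    obtain ⟨v, hv⟩ := Finset.card_eq_one.mp
      (show (τ \ σ).card = 1 by rw [Finset.card_sdiff_of_subset hστ.1]; omega)
    refine ⟨v, (Finset.mem_sdiff.mp (hv ▸ Finset.mem_singleton_self v)).1, ?_⟩
    rw [← Finset.sdiff_singleton_eq_erase, ← hv, Finset.sdiff_sdiff_eq_self hστ.1]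
  refine ⟨sgn R τ v, sgn_mul_self τ v, fun j x => ?_⟩
  induction x using Finsupp.induction_linear with
  | zero => simp
  | add f g hf hg => simp [hf, hg, mul_add]
  | single ρ r =>
    rw [scale_single, bd_single, Finsupp.finsetSum_apply, Finsupp.single_apply]
    by_cases hρ : ρ.1 = τ
    · rw [if_pos hρ, hρ, Finset.sum_eq_single_of_mem v hv]
      · simp [mul_comm]
      · intro v' hv' hne
        rw [Finsupp.single_apply, if_neg]
        exact fun h => hne ((Finset.erase_inj τ hv').mp h)
    · rw [if_neg hρ, mul_zero]
      refine Finset.sum_eq_zero fun v' hv' => ?_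
      rw [Finsupp.single_apply, if_neg]
      intro h
      exact hρ (huniq ρ.1 ρ.2.1 (h ▸ Finset.erase_ssubset hv'))

/-- Up to a boundary, every chain of `K` whose boundary does not involve `σ` is a chain of `L`. The
boundary condition only matters in degree `n = dim τ`. -/
lemma exists_sub_mem_range_incl {K L : FinSC V} (hLK : L.faces ⊆ K.faces) {w : Finset V → R}
    (hw : IsWeight K w) {n : ℕ} {σ τ : Finset V}
    (hσcard : σ.card = n) (hτcard : τ.card = n + 1) (hfree : IsFreeFace K σ τ)
    (hL : L.faces = K.faces \ {σ, τ}) (hwσ : w σ ≠ 0) {u : R} (hu : IsUnit u)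
    (hwτ : w τ = u * w σ) (j : ℕ) (x : WChain K w j)
    (hx : j = n → bd V R (scale K w j x) σ = 0) :
    ∃ (t : WChain K w (j + 1)) (y : WChain L w j), incl hLK w j y = x - wBoundary K w j t := by
  obtain ⟨ε, hε, hbd⟩ := exists_sign_bd_scale_apply hfree (by omega) w
  have hτK := hfree.2.1
  have hσK := hfree.1
  have hrange : ∀ z : WChain K w j, scale K w j z σ = 0 → scale K w j z τ = 0 →
      ∃ y, incl hLK w j y = z := by
    intro z h1 h2
    refine mem_range_incl hLK w j z fun ρ hρ hρL => ?_
    rw [hL] at hρL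
    have : ρ = σ ∨ ρ = τ := by
      by_contra hcon
      exact hρL (Finset.mem_sdiff.mpr ⟨hρ, by simpa using hcon⟩)
    rcases this with rfl | rfl
    · exact h1
    · exact h2
  by_cases hj : j + 1 = n
  · subst hj
    have hwτ0 : w τ ≠ 0 := by rw [hwτ]; exact mul_ne_zero hu.ne_zero hwσ
    obtain ⟨u, rfl⟩ := hu
    let σ' : ChainIdx K w j := ⟨σ, hσK, hσcard, hwσ⟩
    let τ' : ChainIdx K w (j + 1) := ⟨τ, hτK, hτcard, hwτ0⟩
    -- The `σ`-coefficient of `∂ τ` is `ε * u`, whose inverse is `ε * u⁻¹`.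
    let c : R := x σ' * ε * (↑u⁻¹ : R)
    obtain ⟨y, hy⟩ := hrange (x - wBoundary K w j (Finsupp.single τ' c))
      (by
        rw [map_sub, scale_wBoundary K w hw, Finsupp.sub_apply, hbd,
          show scale K w j x σ = x σ' * w σ from scale_apply K w j x σ', scale_single]
        simp only [τ', Finsupp.single_eq_same]
        rw [hwτ]
        have hu' : (↑u⁻¹ : R) * u = 1 := by simp
        linear_combination (-x σ' * w σ * (↑u⁻¹ * ↑u)) * hε - x σ' * w σ * hu')
      (scale_apply_of_card_ne K w j _ τ (by omega))
    exact ⟨_, y, hy⟩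
  · have h1 : scale K w j x σ = 0 := scale_apply_of_card_ne K w j x σ (by omega)
    have h2 : scale K w j x τ = 0 := by
      by_cases hjn : j = n
      · have := hx hjn
        rw [hbd] at this
        linear_combination ε * this - scale K w j x τ * hε
      · exact scale_apply_of_card_ne K w j x τ (by omega)
    obtain ⟨y, hy⟩ := hrange x h1 h2
    exact ⟨0, y, by simpa using hy⟩

/-! ### Homology -/

/-- A criterion for the inclusion of a subcomplex to induce an isomorphism on `H_i`: `hsurj` gives
surjectivity and `hinj` injectivity. -/
lemma nonempty_wHomology_equiv {K L : FinSC V} (hLK : L.faces ⊆ K.faces) {w : Finset V → R}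
    (hw : IsWeight K w) (i : ℕ)
    (hsurj : ∀ z ∈ cycles K w i, ∃ (t : WChain K w (i + 1)) (y : WChain L w i),
      incl hLK w i y = z - wBoundary K w i t)
    (hinj : ∀ (x : WChain L w i) (y : WChain K w (i + 1)),
      incl hLK w i x = wBoundary K w i y → x ∈ bdries L w i) :
    Nonempty (wHomology K w i ≃ₗ[R] wHomology L w i) := by
  have hle : bdries L w i ≤ (bdries K w i).comap (incl hLK w i) := by
    rintro _ ⟨y, rfl⟩
    exact ⟨incl hLK w (i + 1) y, wBoundary_incl hLK hw i y⟩
  let q := Submodule.mapQ (bdries L w i) (bdries K w i) (incl hLK w i) hle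
  have hq : ∀ a ∈ wHomologyS L w i, q a ∈ wHomologyS K w i := by
    rintro _ ⟨x, hx, rfl⟩
    exact ⟨incl hLK w i x, (incl_mem_cycles_iff hLK hw i x).mpr hx, rfl⟩
  refine ⟨(LinearEquiv.ofBijective (q.restrict hq) ⟨?_, ?_⟩).symm⟩
  · rw [← LinearMap.ker_eq_bot, LinearMap.ker_eq_bot']
    rintro ⟨_, x, hx, rfl⟩ h
    have h' : (bdries K w i).mkQ (incl hLK w i x) = 0 := congrArg Subtype.val h
    rw [Submodule.mkQ_apply, Submodule.Quotient.mk_eq_zero] at h'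
    obtain ⟨y, hy⟩ := h'
    apply Subtype.ext
    exact (Submodule.Quotient.mk_eq_zero _).mpr (hinj x y hy.symm)
  · rintro ⟨_, z, hz, rfl⟩
    obtain ⟨t, y, hy⟩ := hsurj z hz
    have hyc : y ∈ cycles L w i := by
      rw [← incl_mem_cycles_iff hLK hw, hy]
      exact Submodule.sub_mem _ hz (wBoundary_mem_cycles K w hw i t)
    refine ⟨classOf L w i y hyc, Subtype.ext ?_⟩
    change (bdries K w i).mkQ (incl hLK w i y) = (bdries K w i).mkQ z
    rw [Submodule.mkQ_apply, Submodule.mkQ_apply, Submodule.Quotient.eq, hy]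
    exact ⟨-t, by simp⟩

/-- Theorem `thm:strongerassoc`.  Let `(K,w)` be a weighted simplicial
complex over an integral domain `R`, and suppose `K` collapses onto `L = K \ {σ,τ}` by an
elementary collapse of dimension `n ≥ 1`, where `σ^{(n-1)}` is a free face of `τ^{(n)}`.
If `w σ ≠ 0` and `w τ = u * w σ` for some unit `u` (i.e. the weights are nonzero
associates), then the collapse preserves weighted homology. -/
theorem elemCollapse_assoc_weight_preserves_wHomology
    (K L : FinSC V) (w : Finset V → R) (hw : IsWeight K w)
    (n : ℕ) (hn : 1 ≤ n) (σ τ : Finset V)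
    (hσcard : σ.card = n) (hτcard : τ.card = n + 1)
    (hfree : IsFreeFace K σ τ)
    (hL : L.faces = K.faces \ {σ, τ})
    (hwσ : w σ ≠ 0) (u : R) (hu : IsUnit u) (hwτ : w τ = u * w σ) :
    ∀ i : ℕ, Nonempty (wHomology K w i ≃ₗ[R] wHomology L w i) := by
  intro i
  have hLK : L.faces ⊆ K.faces := hL ▸ Finset.sdiff_subset
  have key := exists_sub_mem_range_incl hLK hw hσcard hτcard hfree hL hwσ hu hwτ
  refine nonempty_wHomology_equiv hLK hw i (fun z hz => key i z fun hin => ?_) fun x y hxy => ?_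
  · cases i with
    | zero => omega
    | succ i =>
      have hz' : wBoundary K w i z = 0 := hz
      rw [← scale_wBoundary K w hw, hz', map_zero, Finsupp.zero_apply]
  · obtain ⟨t, y', hy'⟩ := key (i + 1) y fun hin => by
      rw [← scale_wBoundary K w hw, ← hxy, scale_incl]
      -- `σ` is not a simplex of `L`, so chains of `L` have no `σ`-coefficient.
      have hσL : σ ∉ L.faces := by rw [hL]; simp
      exact scale_apply_of_notMem L w i x σ hσL
    refine ⟨y', incl_injective hLK w i ?_⟩
    rw [← wBoundary_incl hLK hw, hy', map_sub, wBoundary_wBoundary K w hw, sub_zero, hxy]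

end FinSC
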